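/- Let u, u′ ∈ ℂ^{2n} and A, A′ ∈ sp_{2n}(ℂ). Suppose there exist a, b ∈ GL_n(ℂ) such that, writing g = diag(a, b) ∈ GL_{2n}(ℂ) (block diagonal), one has g u = u′, θ(g) u = u′ (where θ(diag(a,b)) = diag((bᵀ)⁻¹, (aᵀ)⁻¹)), and g A g⁻¹ = A′. Then there exists c ∈ GL_n(ℂ) such that, with h = diag(c, (cᵀ)⁻¹), one has h u = u′ and h A h⁻¹ = A′. In other words, every K̃ = GL_n(ℂ) × GL_n(ℂ)-orbit (block-diagonally embedded in GL_{2n}(ℂ)) in L̃ meets the embedded subspace L = ℂ^{2n} ⊕ sp_{2n}(ℂ) in at most one K-orbit, where K = Sp_{2n}(ℂ) ∩ K̃ = {diag(a, (aᵀ)⁻¹) : a ∈ GL_n(ℂ)}. -/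

import Mathlib

open Matrix

/-- The standard symplectic form matrix `J = [[0, 1ₙ], [−1ₙ, 0]]` on `ℂ^{2n}`,
with `ℂ^{2n}` indexed by `Fin n ⊕ Fin n`. -/
noncomputable def J (n : ℕ) : Matrix (Fin n ⊕ Fin n) (Fin n ⊕ Fin n) ℂ :=
  Matrix.fromBlocks 0 1 (-1) 0

/-- The symplectic Lie algebra `sp_{2n}(ℂ) = {A : Aᵀ J + J A = 0}`. -/
def spLie (n : ℕ) : Set (Matrix (Fin n ⊕ Fin n) (Fin n ⊕ Fin n) ℂ) :=
  {A | Aᵀ * J n + J n * A = 0}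

/-!
Let `σ(g) = J⁻¹ gᵀ J`, an involutive anti-automorphism which is `-1` on `sp` and whose group of
`g` with `σ(g) g = 1` is `Sp`. If `g = diag(a, b)` moves `(u, A)` to `(u', A')`, then applying `σ`
to `g A = A' g`, and comparing `g u = u'` with `σ(g)⁻¹ u = u'`, shows that `s = σ(g) g` commutes
with `A` and fixes `u`. Over an algebraically closed field of characteristic not two, the
invertible `s` has a square root `S = p(s)` that is a polynomial in `s`; taking `p(1) = 1` makes
`S` fix `u`. Since `S` is block diagonal, commutes with `A` and satisfies `σ(S) = S`, the element
`h = g S⁻¹` lies in `K` and moves `(u, A)` to `(u', A')` as well.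

The polynomial `p` comes from interpolating square roots of the eigenvalues, which solves
`p² = X` up to nilpotents, followed by Newton's iteration.
-/

section SquareRoots

open Polynomial

theorem isSquare_of_isNilpotent_sq_sub {S : Type*} [CommRing S] (h2 : IsUnit (2 : S)) {m x : S}
    (hm : IsUnit m) (hx : IsNilpotent (x ^ 2 - m)) : IsSquare m := by
  have hx_unit : IsUnit x := by
    have h := hx.isUnit_add_left_of_commute hm (Commute.all _ _)
    rw [add_sub_cancel] at h
    exact (isUnit_pow_iff two_ne_zero).1 h
  obtain ⟨r, ⟨-, hr⟩, -⟩ := existsUnique_nilpotent_sub_and_aeval_eq_zero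
    (P := X ^ 2 - C m) (x := x) (by simpa using hx)
    (by simpa [one_add_one_eq_two] using h2.mul hx_unit)
  have hr_sq : r ^ 2 = m := by simpa [sub_eq_zero] using hr
  exact (isSquare_iff_exists_sq m).2 ⟨r, hr_sq.symm⟩

variable {K : Type*} [Field K]

theorem eval_zero_minpoly_ne_zero {R : Type*} [Ring R] [Algebra K R] {s : R}
    (hs : IsIntegral K s) (hs_unit : IsUnit s) : (minpoly K s).eval 0 ≠ 0 := by
  intro h0
  obtain ⟨k, hk⟩ : X ∣ minpoly K s := by rwa [X_dvd_iff, coeff_zero_eq_eval_zero]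
  have hk_root : aeval s k = 0 := by
    have h : s * aeval s k = 0 := by rw [← minpoly.aeval K s, hk, map_mul, aeval_X]
    exact hs_unit.mul_right_eq_zero.1 h
  have hk_ne : k ≠ 0 := right_ne_zero_of_mul (hk ▸ minpoly.ne_zero hs)
  have hdvd : X * k ∣ 1 * k := by simpa only [one_mul, ← hk] using minpoly.dvd K s hk_root
  exact not_isUnit_X (isUnit_of_dvd_one ((mul_dvd_mul_iff_right hk_ne).1 hdvd))

variable [IsAlgClosed K]

theorem exists_dvd_sq_sub_X_pow {f : K[X]} (hf : f ≠ 0) :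
    ∃ (q : K[X]) (k : ℕ), f ∣ (q ^ 2 - X) ^ k := by
  classical
  choose sqrt hsqrt using fun z : K ↦ IsAlgClosed.exists_pow_nat_eq z two_pos
  let q := Lagrange.interpolate f.roots.toFinset id sqrt
  have hq : ∀ z ∈ f.roots, X - C z ∣ q ^ 2 - X := fun z hz ↦ by
    have hqz : q.eval z = sqrt z :=
      Lagrange.eval_interpolate_at_node sqrt Function.injective_id.injOn
        (Multiset.mem_toFinset.2 hz)
    rw [dvd_iff_isRoot, IsRoot.def, eval_sub, eval_pow, eval_X, hqz, hsqrt, sub_self]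
  refine ⟨q, Multiset.card f.roots, ?_⟩
  rw [(IsAlgClosed.splits f).eq_prod_roots,
    (isUnit_C.2 (leadingCoeff_ne_zero.2 hf).isUnit).mul_left_dvd,
    ← (IsAlgClosed.splits f).eq_prod_roots, ← Multiset.prod_replicate, ← Multiset.map_const']
  exact Multiset.prod_dvd_prod_of_dvd _ _ hq

variable [NeZero (2 : K)]

theorem exists_dvd_sq_sub_X {f : K[X]} (hf : f.eval 0 ≠ 0) : ∃ p : K[X], f ∣ p ^ 2 - X := by
  have hf_ne : f ≠ 0 := fun h ↦ hf (by rw [h, eval_zero])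
  obtain ⟨q, k, hq⟩ := exists_dvd_sq_sub_X_pow hf_ne
  have hroot : IsUnit (AdjoinRoot.mk f X) := by
    have hcop : IsCoprime X f := by
      rwa [irreducible_X.coprime_iff_not_dvd, X_dvd_iff, coeff_zero_eq_eval_zero]
    obtain ⟨c, d, hcd⟩ := hcop
    refine .of_mul_eq_one_right (AdjoinRoot.mk f c) ?_
    simpa using congrArg (AdjoinRoot.mk f) hcd
  have htwo : IsUnit (2 : AdjoinRoot f) := by
    simpa only [map_ofNat] using (NeZero.ne (2 : K)).isUnit.map (algebraMap K (AdjoinRoot f))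
  have hnil : IsNilpotent (AdjoinRoot.mk f q ^ 2 - AdjoinRoot.mk f X) :=
    ⟨k, by simpa using AdjoinRoot.mk_eq_zero.2 hq⟩
  obtain ⟨r, hr⟩ := (isSquare_iff_exists_sq _).1 (isSquare_of_isNilpotent_sq_sub htwo hroot hnil)
  obtain ⟨p, rfl⟩ := AdjoinRoot.mk_surjective r
  exact ⟨p, AdjoinRoot.mk_eq_zero.1 (by rw [map_sub, map_pow, hr, sub_self])⟩

theorem exists_eval_one_eq_one_and_dvd_sq_sub_X {f : K[X]} (hf : f.eval 0 ≠ 0) :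
    ∃ p : K[X], p.eval 1 = 1 ∧ f ∣ p ^ 2 - X := by
  -- Adjoining the root `1` to `f` forces `p(1)² = 1`.
  obtain ⟨p, hp⟩ := exists_dvd_sq_sub_X (f := f * (X - C 1)) (by simpa using hf)
  have hp_one : p.eval 1 * p.eval 1 = 1 := by
    have h := dvd_iff_isRoot.1 (dvd_of_mul_left_dvd hp)
    simpa [sub_eq_zero, sq] using h
  rcases mul_self_eq_one_iff.1 hp_one with h | h
  · exact ⟨p, h, dvd_of_mul_right_dvd hp⟩
  · exact ⟨-p, by rw [eval_neg, h, neg_neg], by simpa using dvd_of_mul_right_dvd hp⟩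

theorem exists_eval_one_eq_one_and_aeval_sq_eq {R : Type*} [Ring R] [Algebra K R] {s : R}
    (hs : IsIntegral K s) (hs_unit : IsUnit s) :
    ∃ p : K[X], p.eval 1 = 1 ∧ aeval s p ^ 2 = s := by
  obtain ⟨p, hp_one, hp⟩ :=
    exists_eval_one_eq_one_and_dvd_sq_sub_X (eval_zero_minpoly_ne_zero hs hs_unit)
  refine ⟨p, hp_one, ?_⟩
  simpa [sub_eq_zero] using aeval_eq_zero_of_dvd_aeval_eq_zero hp (minpoly.aeval K s)

end SquareRoots

section MatrixPolynomials

open Polynomial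

variable {R m n : Type*} [Fintype m] [DecidableEq m] [Fintype n] [DecidableEq n]

theorem aeval_transpose [CommSemiring R] (A : Matrix m m R) (p : R[X]) :
    aeval Aᵀ p = (aeval A p)ᵀ := by
  simp only [aeval_eq_sum_range, transpose_sum, transpose_smul, transpose_pow]

theorem aeval_fromBlocks_diagonal [CommSemiring R] (A : Matrix m m R) (D : Matrix n n R)
    (p : R[X]) :
    aeval (fromBlocks A 0 0 D) p = fromBlocks (aeval A p) 0 0 (aeval D p) := by
  induction p using Polynomial.induction_on' with
  | add p q hp hq => simp only [map_add, hp, hq, fromBlocks_add, add_zero]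
  | monomial k c =>
    simp only [aeval_monomial, ← Algebra.smul_def, fromBlocks_diagonal_pow, fromBlocks_smul,
      smul_zero]

theorem aeval_mulVec_of_mulVec_eq_smul [CommRing R] {A : Matrix m m R} {v : m → R} {c : R}
    (h : A *ᵥ v = c • v) (p : R[X]) : aeval A p *ᵥ v = p.eval c • v := by
  have h_lin : toLinAlgEquiv' A v = c • v := h
  have h_aeval := Module.End.aeval_apply_of_mem_apply_eq_smul (p := p) h_lin
  rwa [aeval_algHom_apply] at h_aeval

end MatrixPolynomials

section SymplecticAdjoint

variable {R l : Type*} [CommRing R] [Fintype l] [DecidableEq l]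

/-- The adjoint `σ(g) = J⁻¹ gᵀ J` of `g` with respect to the standard symplectic form. It does not
depend on the sign of `J`, so Mathlib's `Matrix.J` serves, although it is minus the
`J = [[0, 1], [-1, 0]]` of the paper. -/
noncomputable def symplecticAdjoint (g : Matrix (l ⊕ l) (l ⊕ l) R) : Matrix (l ⊕ l) (l ⊕ l) R :=
  (Matrix.J l R)⁻¹ * gᵀ * Matrix.J l R

theorem symplecticAdjoint_mul (g h : Matrix (l ⊕ l) (l ⊕ l) R) :
    symplecticAdjoint (g * h) = symplecticAdjoint h * symplecticAdjoint g := by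
  simp only [symplecticAdjoint, transpose_mul, Matrix.mul_assoc,
    mul_nonsing_inv_cancel_left _ _ (isUnit_det_J l R)]

theorem symplecticAdjoint_fromBlocks_diagonal (a b : Matrix l l R) :
    symplecticAdjoint (fromBlocks a 0 0 b) = fromBlocks bᵀ 0 0 aᵀ := by
  rw [symplecticAdjoint, J_inv]
  simp [Matrix.J, fromBlocks_transpose, fromBlocks_multiply, fromBlocks_neg]

theorem symplecticAdjoint_eq_neg {A : Matrix (l ⊕ l) (l ⊕ l) R}
    (hA : A ∈ LieAlgebra.Symplectic.sp l R) : symplecticAdjoint A = -A := by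
  have hskew : Aᵀ * Matrix.J l R = Matrix.J l R * -A := by
    simpa [LieAlgebra.Symplectic.sp, Matrix.IsSkewAdjoint, Matrix.IsAdjointPair] using hA
  rw [symplecticAdjoint, Matrix.mul_assoc, hskew,
    nonsing_inv_mul_cancel_left _ _ (isUnit_det_J l R)]

theorem commute_symplecticAdjoint_mul_self {g A A' : Matrix (l ⊕ l) (l ⊕ l) R}
    (hA : A ∈ LieAlgebra.Symplectic.sp l R) (hA' : A' ∈ LieAlgebra.Symplectic.sp l R)
    (hg : g * A = A' * g) : Commute (symplecticAdjoint g * g) A := by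
  have hσ : A * symplecticAdjoint g = symplecticAdjoint g * A' := by
    simpa only [symplecticAdjoint_mul, symplecticAdjoint_eq_neg hA, symplecticAdjoint_eq_neg hA',
      Matrix.neg_mul, Matrix.mul_neg, neg_inj] using congrArg symplecticAdjoint hg
  calc symplecticAdjoint g * g * A = symplecticAdjoint g * A' * g := by
        rw [Matrix.mul_assoc, hg, Matrix.mul_assoc]
    _ = A * (symplecticAdjoint g * g) := by rw [← hσ, Matrix.mul_assoc]

theorem symplecticAdjoint_mul_self_mulVec_eq {a b : Matrix l l R} (ha : IsUnit a) (hb : IsUnit b)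
    {u : l ⊕ l → R} (hu : fromBlocks a 0 0 b *ᵥ u = fromBlocks (bᵀ)⁻¹ 0 0 (aᵀ)⁻¹ *ᵥ u) :
    (symplecticAdjoint (fromBlocks a 0 0 b) * fromBlocks a 0 0 b) *ᵥ u = u := by
  have ha_det : IsUnit aᵀ.det := (isUnit_iff_isUnit_det _).1 ((isUnit_transpose a).2 ha)
  have hb_det : IsUnit bᵀ.det := (isUnit_iff_isUnit_det _).1 ((isUnit_transpose b).2 hb)
  rw [← mulVec_mulVec, hu, symplecticAdjoint_fromBlocks_diagonal, mulVec_mulVec,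
    fromBlocks_multiply, mul_nonsing_inv _ hb_det, mul_nonsing_inv _ ha_det]
  simp only [Matrix.mul_zero, Matrix.zero_mul, add_zero, zero_add, fromBlocks_one, one_mulVec]

end SymplecticAdjoint

section PolarDecomposition

open Polynomial

variable {K l : Type*} [Field K] [IsAlgClosed K] [NeZero (2 : K)] [Fintype l] [DecidableEq l]

theorem exists_fromBlocks_eq_mul_aeval_symplecticAdjoint {a b : Matrix l l K}
    (ha : IsUnit a) (hb : IsUnit b) :
    ∃ (c : Matrix l l K) (p : K[X]), IsUnit c ∧ p.eval 1 = 1 ∧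
      fromBlocks a 0 0 b = fromBlocks c 0 0 (cᵀ)⁻¹ *
        aeval (symplecticAdjoint (fromBlocks a 0 0 b) * fromBlocks a 0 0 b) p := by
  have hm : IsUnit (bᵀ * a) := ((isUnit_transpose b).2 hb).mul ha
  obtain ⟨p, hp_one, hp⟩ :=
    exists_eval_one_eq_one_and_aeval_sq_eq (Algebra.IsIntegral.isIntegral (R := K) _) hm
  have hs : symplecticAdjoint (fromBlocks a 0 0 b) * fromBlocks a 0 0 b =
      fromBlocks (bᵀ * a) 0 0 (bᵀ * a)ᵀ := by
    simp [symplecticAdjoint_fromBlocks_diagonal, fromBlocks_multiply]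
  set r := aeval (bᵀ * a) p
  have hr : IsUnit r := (isUnit_pow_iff two_ne_zero).1 (hp ▸ hm)
  have hr_det := (isUnit_iff_isUnit_det r).1 hr
  have hc : IsUnit (a * r⁻¹) := ha.mul (isUnit_nonsing_inv_iff.2 hr)
  have hbr : (a * r⁻¹)ᵀ * b = rᵀ := by
    have hab : aᵀ * b = rᵀ * rᵀ := by
      rw [← transpose_mul, ← sq, hp, transpose_mul, transpose_transpose]
    rw [transpose_mul, Matrix.mul_assoc, hab, ← Matrix.mul_assoc, ← transpose_mul,
      mul_nonsing_inv _ hr_det, transpose_one, Matrix.one_mul]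
  have hc_det : IsUnit (a * r⁻¹)ᵀ.det := (isUnit_iff_isUnit_det _).1 ((isUnit_transpose _).2 hc)
  refine ⟨a * r⁻¹, p, hc, hp_one, ?_⟩
  rw [hs, aeval_fromBlocks_diagonal, aeval_transpose, ← hbr, fromBlocks_multiply,
    nonsing_inv_mul_cancel_left _ _ hc_det, nonsing_inv_mul_cancel_right _ _ hr_det]
  simp only [Matrix.mul_zero, Matrix.zero_mul, add_zero, zero_add]

theorem enhanced_orbit_embedding_K_general
    {u u' : l ⊕ l → K} {A A' : Matrix (l ⊕ l) (l ⊕ l) K}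
    (hA : A ∈ LieAlgebra.Symplectic.sp l K) (hA' : A' ∈ LieAlgebra.Symplectic.sp l K)
    {a b : Matrix l l K} (ha : IsUnit a) (hb : IsUnit b)
    (hu : fromBlocks a 0 0 b *ᵥ u = u')
    (hθu : fromBlocks (bᵀ)⁻¹ 0 0 (aᵀ)⁻¹ *ᵥ u = u')
    (hconj : fromBlocks a 0 0 b * A * (fromBlocks a 0 0 b)⁻¹ = A') :
    ∃ c : Matrix l l K, IsUnit c ∧ fromBlocks c 0 0 (cᵀ)⁻¹ *ᵥ u = u' ∧
      fromBlocks c 0 0 (cᵀ)⁻¹ * A * (fromBlocks c 0 0 (cᵀ)⁻¹)⁻¹ = A' := by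
  obtain ⟨c, p, hc, hp_one, hpolar⟩ := exists_fromBlocks_eq_mul_aeval_symplecticAdjoint ha hb
  have hg : IsUnit (fromBlocks a 0 0 b) := isUnit_fromBlocks_zero₂₁.2 ⟨ha, hb⟩
  have hs_fix := symplecticAdjoint_mul_self_mulVec_eq ha hb (hu.trans hθu.symm)
  have hs_comm := commute_symplecticAdjoint_mul_self hA hA'
    (by rw [← hconj, nonsing_inv_mul_cancel_right _ _ ((isUnit_iff_isUnit_det _).1 hg)])
  set g := fromBlocks a 0 0 b
  set h := fromBlocks c 0 0 (cᵀ)⁻¹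
  set S := aeval (symplecticAdjoint g * g) p
  have hSu : S *ᵥ u = u := by
    rw [aeval_mulVec_of_mulVec_eq_smul (hs_fix.trans (one_smul K u).symm), hp_one, one_smul]
  have hSA : Commute S A :=
    (Algebra.commute_of_mem_adjoin_singleton_of_commute (aeval_mem_adjoin_singleton K _)
      hs_comm.symm).symm
  have hS_det : IsUnit S.det := by
    rw [hpolar, isUnit_iff_isUnit_det, det_mul] at hg
    exact isUnit_of_mul_isUnit_right hg
  refine ⟨c, hc, by rw [← hu, hpolar, ← mulVec_mulVec, hSu], ?_⟩
  calc h * A * h⁻¹ = h * (S * A * S⁻¹) * h⁻¹ := by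
        rw [hSA.eq, mul_nonsing_inv_cancel_right _ _ hS_det]
    _ = h * S * A * (h * S)⁻¹ := by simp only [Matrix.mul_inv_rev, Matrix.mul_assoc]
    _ = A' := by rw [← hpolar, hconj]

end PolarDecomposition

theorem mem_sp_of_mem_spLie {n : ℕ} {A : Matrix (Fin n ⊕ Fin n) (Fin n ⊕ Fin n) ℂ}
    (hA : A ∈ spLie n) : A ∈ LieAlgebra.Symplectic.sp (Fin n) ℂ := by
  have hJ : _root_.J n = -Matrix.J (Fin n) ℂ := by
    simp [_root_.J, Matrix.J, fromBlocks_neg]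
  have hskew : Aᵀ * _root_.J n + _root_.J n * A = 0 := hA
  rw [hJ, Matrix.mul_neg, Matrix.neg_mul, ← neg_add, neg_eq_zero] at hskew
  simpa [LieAlgebra.Symplectic.sp, Matrix.IsSkewAdjoint, Matrix.IsAdjointPair] using
    eq_neg_of_add_eq_zero_left hskew

/-- Every `K̃ = GL_n(ℂ) × GL_n(ℂ)`-orbit (block-diagonally embedded in
`GL_{2n}(ℂ)`) in the enhanced Lie algebra `L̃` meets the embedded subspace
`L = ℂ^{2n} ⊕ sp_{2n}(ℂ)` in at most one `K`-orbit, where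
`K = Sp_{2n}(ℂ) ∩ K̃ = {diag(a, (aᵀ)⁻¹)}`: if `g = diag(a, b)` with
`a, b ∈ GL_n(ℂ)` satisfies `g u = u′`, `θ(g) u = u′`
(with `θ(diag(a,b)) = diag((bᵀ)⁻¹, (aᵀ)⁻¹)`) and `g A g⁻¹ = A′`, then there
exists `c ∈ GL_n(ℂ)` with `h = diag(c, (cᵀ)⁻¹)` satisfying `h u = u′` and
`h A h⁻¹ = A′`. -/
theorem enhanced_orbit_embedding_K (n : ℕ) (hn : 1 ≤ n)
    (u u' : (Fin n ⊕ Fin n) → ℂ)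
    (A A' : Matrix (Fin n ⊕ Fin n) (Fin n ⊕ Fin n) ℂ)
    (hA : A ∈ spLie n) (hA' : A' ∈ spLie n)
    (a b : Matrix (Fin n) (Fin n) ℂ) (ha : IsUnit a) (hb : IsUnit b)
    (h1 : Matrix.fromBlocks a 0 0 b *ᵥ u = u')
    (h2 : Matrix.fromBlocks (bᵀ)⁻¹ 0 0 (aᵀ)⁻¹ *ᵥ u = u')
    (h3 : Matrix.fromBlocks a 0 0 b * A * (Matrix.fromBlocks a 0 0 b)⁻¹ = A') :
    ∃ c : Matrix (Fin n) (Fin n) ℂ, IsUnit c ∧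
      Matrix.fromBlocks c 0 0 (cᵀ)⁻¹ *ᵥ u = u' ∧
      Matrix.fromBlocks c 0 0 (cᵀ)⁻¹ * A * (Matrix.fromBlocks c 0 0 (cᵀ)⁻¹)⁻¹ = A' :=
  enhanced_orbit_embedding_K_general (mem_sp_of_mem_spLie hA) (mem_sp_of_mem_spLie hA')
    ha hb h1 h2 h3
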